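/- Let Ω ⊆ ℝ³ be open, let R be a real orthogonal 3×3 matrix with R ''Ω = Ω (Ω is invariant under R), and let A : ℝ³ → Matrix (Fin 3) (Fin 3) ℂ, β : ℝ³ → ℂ³, ϱ, f : ℝ³ → ℂ satisfy the equivariance conditions A(R x) = R A(x) Rᵀ (with R regarded as a complex matrix), β(R x) = R β(x), ϱ(R x) = ϱ(x) and f(R x) = f(x) for all x ∈ Ω. If u : ℝ³ → ℂ³ and w : ℝ³ → ℂ are differentiable on Ω and satisfy A u + β w + ∇w = 0 and div u − β·u + ϱ w = f at every point of Ω, then the transformed fields ũ(x) := Rᵀ u(R x) and w̃(x) := w(R x) are differentiable on Ω and satisfy the same system A ũ + β w̃ + ∇w̃ = 0 and div ũ − β·ũ + ϱ w̃ = f at every point of Ω. -/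

import Mathlib

open Matrix

/-- Gradient of a complex-valued function on ℝ³: vector of partial derivatives. -/
noncomputable def grad (g : (Fin 3 → ℝ) → ℂ) (x : Fin 3 → ℝ) : Fin 3 → ℂ :=
  fun i => fderiv ℝ g x (Pi.single i 1)

/-- Divergence of a ℂ³-valued field on ℝ³: sum of the partial derivatives of its components. -/
noncomputable def divC (u : (Fin 3 → ℝ) → Fin 3 → ℂ) (x : Fin 3 → ℝ) : ℂ :=
  ∑ i, fderiv ℝ (fun y => u y i) x (Pi.single i 1)

/-!
For an orthogonal `R`, the transpose in `ũ = Rᵀ u ∘ R` plays two roles: it is the inverse of `R` and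
it is the map pulling covectors back along `R`. Keeping the two apart, the argument works for every
invertible `R` with inverse `S`, for `ũ = S u ∘ R` and `w̃ = w ∘ R`. The chain rule gives
`∇w̃ = Rᵀ (∇w) ∘ R`, and the Jacobian of `ũ` is the conjugate `S (Du ∘ R) R`, so that
`div ũ = (div u) ∘ R` by cyclicity of the trace. If `A` transforms as a bilinear form and `β` as a
covector, then the left-hand side of the first equation is pulled back as a covector and that of the
second as a scalar, so solutions pull back to solutions.
-/

section MatrixMap

variable {m n α B : Type*} [Fintype n] [CommSemiring α] [Semiring B] [Algebra α B]

theorem map_algebraMap_mul_eq_one [DecidableEq m] {M : Matrix m n α} {N : Matrix n m α}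
    (h : M * N = 1) : M.map (algebraMap α B) * N.map (algebraMap α B) = 1 := by
  rw [← Matrix.map_mul, h, Matrix.map_one _ (map_zero _) (map_one _)]

end MatrixMap

section Congruence

variable {m n α : Type*} [Fintype m] [Fintype n] [DecidableEq n] [CommSemiring α]
  {P : Matrix m n α} {Q : Matrix n m α}

theorem transpose_mul_transpose_mul_mul_mul_cancel (h : Q * P = 1) (M : Matrix n n α) :
    Pᵀ * (Qᵀ * M * Q) * P = M := by
  calc Pᵀ * (Qᵀ * M * Q) * P = (Q * P)ᵀ * M * (Q * P) := by
        simp only [Matrix.transpose_mul, Matrix.mul_assoc]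
    _ = M := by rw [h, Matrix.transpose_one, Matrix.one_mul, Matrix.mul_one]

theorem transpose_mulVec_vecMul_cancel (h : Q * P = 1) (v : n → α) : (Qᵀ *ᵥ v) ᵥ* P = v := by
  rw [Matrix.mulVec_transpose, Matrix.vecMul_vecMul, h, Matrix.vecMul_one]

end Congruence

section CoordinateCalculus

variable {l m n 𝕜 𝔸 : Type*} [NontriviallyNormedField 𝕜] [NormedCommRing 𝔸] [NormedAlgebra 𝕜 𝔸]

/-- The vector of partial derivatives of `g` at `x`; `grad` is the case of `ℂ`-valued functions
on `ℝ³`. -/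
noncomputable def coordGrad [DecidableEq n] (g : (n → 𝕜) → 𝔸) (x : n → 𝕜) : n → 𝔸 :=
  fun i => fderiv 𝕜 g x (Pi.single i 1)

/-- The Jacobian matrix of `u` at `x`, whose rows are the gradients of the components of `u`. The
values of `u` have components in an algebra `𝔸` over the scalar field, so this is not the matrix of
a `𝕜`-linear map. -/
noncomputable def jacobian [DecidableEq n] (u : (n → 𝕜) → m → 𝔸) (x : n → 𝕜) : Matrix m n 𝔸 :=
  Matrix.of fun i => coordGrad (fun y => u y i) x

/-- The divergence of `u` at `x`, encoded as the trace of the Jacobian matrix; `divC` is the case of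
`ℂ³`-valued fields on `ℝ³`. -/
noncomputable def coordDiv [Fintype n] [DecidableEq n] (u : (n → 𝕜) → n → 𝔸) (x : n → 𝕜) : 𝔸 :=
  (jacobian u x).trace

theorem hasFDerivAt_mulVec [Fintype n] (R : Matrix m n 𝕜) (x : n → 𝕜) :
    HasFDerivAt (fun y => R *ᵥ y) ⟨R.mulVecLin, R.mulVecLin.continuous_on_pi⟩ x :=
  ContinuousLinearMap.hasFDerivAt ⟨R.mulVecLin, R.mulVecLin.continuous_on_pi⟩

theorem differentiableAt_comp_mulVec {E : Type*} [NormedAddCommGroup E] [NormedSpace 𝕜 E]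
    [Finite m] [Fintype n] (R : Matrix m n 𝕜) {g : (m → 𝕜) → E} {x : n → 𝕜}
    (hg : DifferentiableAt 𝕜 g (R *ᵥ x)) : DifferentiableAt 𝕜 (fun y => g (R *ᵥ y)) x := by
  cases nonempty_fintype m
  exact hg.comp x (hasFDerivAt_mulVec R x).differentiableAt

theorem differentiableAt_const_mulVec {E : Type*} [NormedAddCommGroup E] [NormedSpace 𝕜 E]
    [Fintype m] [Finite l] (C : Matrix l m 𝔸) {u : E → m → 𝔸} {x : E}
    (hu : DifferentiableAt 𝕜 u x) : DifferentiableAt 𝕜 (fun y => C *ᵥ u y) x := by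
  cases nonempty_fintype l
  unfold Matrix.mulVec dotProduct
  fun_prop

theorem fderiv_apply_eq_coordGrad_dotProduct [Fintype n] [DecidableEq n] (g : (n → 𝕜) → 𝔸)
    (x v : n → 𝕜) : fderiv 𝕜 g x v = coordGrad g x ⬝ᵥ (algebraMap 𝕜 𝔸 ∘ v) := by
  calc fderiv 𝕜 g x v = ∑ i, v i • fderiv 𝕜 g x (Pi.single i 1) := by
        conv_lhs => rw [pi_eq_sum_univ' v, map_sum]
        simp only [map_smul]
    _ = coordGrad g x ⬝ᵥ (algebraMap 𝕜 𝔸 ∘ v) :=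
        Finset.sum_congr rfl fun i _ => by rw [Algebra.smul_def, mul_comm]; rfl

theorem coordGrad_comp_mulVec [Fintype m] [DecidableEq m] [Fintype n] [DecidableEq n]
    (R : Matrix m n 𝕜) {g : (m → 𝕜) → 𝔸} {x : n → 𝕜} (hg : DifferentiableAt 𝕜 g (R *ᵥ x)) :
    coordGrad (fun y => g (R *ᵥ y)) x = coordGrad g (R *ᵥ x) ᵥ* R.map (algebraMap 𝕜 𝔸) := by
  have chain_rule := (hg.hasFDerivAt.comp x (hasFDerivAt_mulVec R x)).fderiv
  ext j
  calc fderiv 𝕜 (fun y => g (R *ᵥ y)) x (Pi.single j 1)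
      = fderiv 𝕜 g (R *ᵥ x) (R *ᵥ Pi.single j 1) := DFunLike.congr_fun chain_rule _
    _ = coordGrad g (R *ᵥ x) ⬝ᵥ (algebraMap 𝕜 𝔸 ∘ R.col j) := by
        rw [fderiv_apply_eq_coordGrad_dotProduct, Matrix.mulVec_single_one]
    _ = (coordGrad g (R *ᵥ x) ᵥ* R.map (algebraMap 𝕜 𝔸)) j := rfl

theorem jacobian_comp_mulVec [Finite l] [Fintype m] [DecidableEq m] [Fintype n] [DecidableEq n]
    (R : Matrix m n 𝕜) {u : (m → 𝕜) → l → 𝔸} {x : n → 𝕜} (hu : DifferentiableAt 𝕜 u (R *ᵥ x)) :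
    jacobian (fun y => u (R *ᵥ y)) x = jacobian u (R *ᵥ x) * R.map (algebraMap 𝕜 𝔸) := by
  cases nonempty_fintype l
  ext i j
  exact congrFun (coordGrad_comp_mulVec R (differentiableAt_pi.1 hu i)) j

theorem jacobian_const_mulVec [Fintype m] [Finite n] [DecidableEq n]
    (C : Matrix l m 𝔸) {u : (n → 𝕜) → m → 𝔸} {x : n → 𝕜} (hu : DifferentiableAt 𝕜 u x) :
    jacobian (fun y => C *ᵥ u y) x = C * jacobian u x := by
  cases nonempty_fintype n
  ext i j
  have hderiv : HasFDerivAt (fun y => (C *ᵥ u y) i)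
      (∑ k, C i k • fderiv 𝕜 (fun y => u y k) x) x :=
    HasFDerivAt.fun_sum fun k _ => (differentiableAt_pi.1 hu k).hasFDerivAt.const_mul (C i k)
  simp [jacobian, coordGrad, hderiv.fderiv, Matrix.mul_apply]

theorem coordDiv_mulVec_comp_mulVec [Fintype m] [DecidableEq m] [Fintype n] [DecidableEq n]
    {R : Matrix m n 𝕜} {S : Matrix n m 𝕜} (hRS : R * S = 1) {u : (m → 𝕜) → m → 𝔸} {x : n → 𝕜}
    (hu : DifferentiableAt 𝕜 u (R *ᵥ x)) :
    coordDiv (fun y => S.map (algebraMap 𝕜 𝔸) *ᵥ u (R *ᵥ y)) x = coordDiv u (R *ᵥ x) := by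
  set P := R.map (algebraMap 𝕜 𝔸)
  set Q := S.map (algebraMap 𝕜 𝔸)
  calc coordDiv (fun y => Q *ᵥ u (R *ᵥ y)) x = (Q * (jacobian u (R *ᵥ x) * P)).trace := by
        rw [coordDiv, jacobian_const_mulVec Q (differentiableAt_comp_mulVec R hu),
          jacobian_comp_mulVec R hu]
    _ = (jacobian u (R *ᵥ x) * (P * Q)).trace := by rw [Matrix.trace_mul_comm, Matrix.mul_assoc]
    _ = coordDiv u (R *ᵥ x) := by rw [map_algebraMap_mul_eq_one hRS, Matrix.mul_one, coordDiv]

end CoordinateCalculus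

section GravitoAcoustic

variable {m n 𝕜 𝔸 : Type*} [Fintype m] [DecidableEq m] [Fintype n] [DecidableEq n]
  [NontriviallyNormedField 𝕜] [NormedCommRing 𝔸] [NormedAlgebra 𝕜 𝔸]

/-- The left-hand side `A u + β w + ∇w` of the first equation at `x`, written componentwise as in
the theorem. -/
noncomputable def momentumOp (A : (n → 𝕜) → Matrix n n 𝔸) (β : (n → 𝕜) → n → 𝔸)
    (u : (n → 𝕜) → n → 𝔸) (w : (n → 𝕜) → 𝔸) (x : n → 𝕜) : n → 𝔸 :=
  fun i => (A x *ᵥ u x) i + β x i * w x + coordGrad w x i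

/-- The left-hand side `div u - β·u + ϱ w` of the second equation at `x`. -/
noncomputable def continuityOp (β : (n → 𝕜) → n → 𝔸) (ϱ : (n → 𝕜) → 𝔸)
    (u : (n → 𝕜) → n → 𝔸) (w : (n → 𝕜) → 𝔸) (x : n → 𝕜) : 𝔸 :=
  coordDiv u x - β x ⬝ᵥ u x + ϱ x * w x

theorem momentumOp_eq_add_smul_add (A : (n → 𝕜) → Matrix n n 𝔸) (β u : (n → 𝕜) → n → 𝔸)
    (w : (n → 𝕜) → 𝔸) (x : n → 𝕜) :
    momentumOp A β u w x = A x *ᵥ u x + w x • β x + coordGrad w x := by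
  ext i
  simp only [momentumOp, Pi.add_apply, Pi.smul_apply, smul_eq_mul, mul_comm]

theorem momentumOp_mulVec_comp_mulVec {R : Matrix m n 𝕜} {S : Matrix n m 𝕜} (hRS : R * S = 1)
    {A : (n → 𝕜) → Matrix n n 𝔸} {A' : (m → 𝕜) → Matrix m m 𝔸}
    {β : (n → 𝕜) → n → 𝔸} {β' : (m → 𝕜) → m → 𝔸}
    {u : (m → 𝕜) → m → 𝔸} {w : (m → 𝕜) → 𝔸} {x : n → 𝕜}
    (hA : A x = (R.map (algebraMap 𝕜 𝔸))ᵀ * A' (R *ᵥ x) * R.map (algebraMap 𝕜 𝔸))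
    (hβ : β x = β' (R *ᵥ x) ᵥ* R.map (algebraMap 𝕜 𝔸))
    (hw : DifferentiableAt 𝕜 w (R *ᵥ x)) :
    momentumOp A β (fun y => S.map (algebraMap 𝕜 𝔸) *ᵥ u (R *ᵥ y)) (fun y => w (R *ᵥ y)) x =
      momentumOp A' β' u w (R *ᵥ x) ᵥ* R.map (algebraMap 𝕜 𝔸) := by
  have hAu : A x *ᵥ (S.map (algebraMap 𝕜 𝔸) *ᵥ u (R *ᵥ x)) =
      (A' (R *ᵥ x) *ᵥ u (R *ᵥ x)) ᵥ* R.map (algebraMap 𝕜 𝔸) := by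
    rw [hA, Matrix.mulVec_mulVec, Matrix.mul_assoc, map_algebraMap_mul_eq_one hRS, Matrix.mul_one,
      ← Matrix.mulVec_mulVec, Matrix.mulVec_transpose]
  rw [momentumOp_eq_add_smul_add, momentumOp_eq_add_smul_add, hAu, hβ, coordGrad_comp_mulVec R hw,
    Matrix.add_vecMul, Matrix.add_vecMul, Matrix.smul_vecMul]

theorem continuityOp_mulVec_comp_mulVec {R : Matrix m n 𝕜} {S : Matrix n m 𝕜} (hRS : R * S = 1)
    {β : (n → 𝕜) → n → 𝔸} {β' : (m → 𝕜) → m → 𝔸} {ϱ : (n → 𝕜) → 𝔸} {ϱ' : (m → 𝕜) → 𝔸}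
    {u : (m → 𝕜) → m → 𝔸} {w : (m → 𝕜) → 𝔸} {x : n → 𝕜}
    (hβ : β x = β' (R *ᵥ x) ᵥ* R.map (algebraMap 𝕜 𝔸)) (hϱ : ϱ x = ϱ' (R *ᵥ x))
    (hu : DifferentiableAt 𝕜 u (R *ᵥ x)) :
    continuityOp β ϱ (fun y => S.map (algebraMap 𝕜 𝔸) *ᵥ u (R *ᵥ y)) (fun y => w (R *ᵥ y)) x =
      continuityOp β' ϱ' u w (R *ᵥ x) := by
  have hβu : β x ⬝ᵥ (S.map (algebraMap 𝕜 𝔸) *ᵥ u (R *ᵥ x)) = β' (R *ᵥ x) ⬝ᵥ u (R *ᵥ x) := by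
    rw [hβ, ← Matrix.dotProduct_mulVec, Matrix.mulVec_mulVec, map_algebraMap_mul_eq_one hRS,
      Matrix.one_mulVec]
  rw [continuityOp, coordDiv_mulVec_comp_mulVec hRS hu, hβu, hϱ, continuityOp]

theorem stmt12_general {Ω : Set (n → 𝕜)} {R S : Matrix n n 𝕜} (hSR : S * R = 1)
    (hΩR : Set.MapsTo (fun x => R *ᵥ x) Ω Ω)
    {A : (n → 𝕜) → Matrix n n 𝔸} {β : (n → 𝕜) → n → 𝔸} {ϱ f : (n → 𝕜) → 𝔸}
    (hA : ∀ x ∈ Ω, A (R *ᵥ x) = (S.map (algebraMap 𝕜 𝔸))ᵀ * A x * S.map (algebraMap 𝕜 𝔸))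
    (hβ : ∀ x ∈ Ω, β (R *ᵥ x) = (S.map (algebraMap 𝕜 𝔸))ᵀ *ᵥ β x)
    (hϱ : ∀ x ∈ Ω, ϱ (R *ᵥ x) = ϱ x) (hf : ∀ x ∈ Ω, f (R *ᵥ x) = f x)
    {u : (n → 𝕜) → n → 𝔸} {w : (n → 𝕜) → 𝔸}
    (hu : ∀ x ∈ Ω, DifferentiableAt 𝕜 u x) (hw : ∀ x ∈ Ω, DifferentiableAt 𝕜 w x)
    (hsys : ∀ x ∈ Ω, (∀ i, momentumOp A β u w x i = 0) ∧ continuityOp β ϱ u w x = f x) :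
    (∀ x ∈ Ω, DifferentiableAt 𝕜 (fun y => S.map (algebraMap 𝕜 𝔸) *ᵥ u (R *ᵥ y)) x) ∧
    (∀ x ∈ Ω, DifferentiableAt 𝕜 (fun y => w (R *ᵥ y)) x) ∧
    (∀ x ∈ Ω,
      (∀ i, momentumOp A β (fun y => S.map (algebraMap 𝕜 𝔸) *ᵥ u (R *ᵥ y))
        (fun y => w (R *ᵥ y)) x i = 0) ∧
      continuityOp β ϱ (fun y => S.map (algebraMap 𝕜 𝔸) *ᵥ u (R *ᵥ y))
        (fun y => w (R *ᵥ y)) x = f x) := by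
  have hRS : R * S = 1 := mul_eq_one_comm.1 hSR
  have hQP := map_algebraMap_mul_eq_one (B := 𝔸) hSR
  refine ⟨fun x hx => ?_, fun x hx => differentiableAt_comp_mulVec R (hw _ (hΩR hx)),
    fun x hx => ?_⟩
  · exact differentiableAt_const_mulVec _ (differentiableAt_comp_mulVec R (hu _ (hΩR hx)))
  obtain ⟨hmomentum, hcontinuity⟩ := hsys _ (hΩR hx)
  have hA' : A x = (R.map (algebraMap 𝕜 𝔸))ᵀ * A (R *ᵥ x) * R.map (algebraMap 𝕜 𝔸) := by
    rw [hA x hx, transpose_mul_transpose_mul_mul_mul_cancel hQP]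
  have hβ' : β x = β (R *ᵥ x) ᵥ* R.map (algebraMap 𝕜 𝔸) := by
    rw [hβ x hx, transpose_mulVec_vecMul_cancel hQP]
  constructor
  · rw [momentumOp_mulVec_comp_mulVec hRS hA' hβ' (hw _ (hΩR hx)), funext hmomentum]
    exact congrFun (Matrix.zero_vecMul _)
  · rw [continuityOp_mulVec_comp_mulVec hRS hβ' (hϱ x hx).symm (hu _ (hΩR hx)), hcontinuity,
      hf x hx]

end GravitoAcoustic

theorem stmt12 (Ω : Set (Fin 3 → ℝ)) (hΩ : IsOpen Ω)
    (R : Matrix (Fin 3) (Fin 3) ℝ)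
    (hR : Rᵀ * R = 1 ∧ R * Rᵀ = 1)
    (hΩR : (fun x => R *ᵥ x) '' Ω = Ω)
    (A : (Fin 3 → ℝ) → Matrix (Fin 3) (Fin 3) ℂ)
    (β : (Fin 3 → ℝ) → Fin 3 → ℂ) (ϱ f : (Fin 3 → ℝ) → ℂ)
    (hAeq : ∀ x ∈ Ω, A (R *ᵥ x) = R.map Complex.ofReal * A x * (R.map Complex.ofReal)ᵀ)
    (hβeq : ∀ x ∈ Ω, β (R *ᵥ x) = R.map Complex.ofReal *ᵥ β x)
    (hϱeq : ∀ x ∈ Ω, ϱ (R *ᵥ x) = ϱ x)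
    (hfeq : ∀ x ∈ Ω, f (R *ᵥ x) = f x)
    (u : (Fin 3 → ℝ) → Fin 3 → ℂ) (w : (Fin 3 → ℝ) → ℂ)
    (hu : ∀ x ∈ Ω, DifferentiableAt ℝ u x)
    (hw : ∀ x ∈ Ω, DifferentiableAt ℝ w x)
    (hsys : ∀ x ∈ Ω,
      (∀ i, (A x *ᵥ u x) i + β x i * w x + grad w x i = 0) ∧
      divC u x - (∑ i, β x i * u x i) + ϱ x * w x = f x) :
    (∀ x ∈ Ω, DifferentiableAt ℝ (fun y => (R.map Complex.ofReal)ᵀ *ᵥ u (R *ᵥ y)) x) ∧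
    (∀ x ∈ Ω, DifferentiableAt ℝ (fun y => w (R *ᵥ y)) x) ∧
    (∀ x ∈ Ω,
      (∀ i, (A x *ᵥ ((R.map Complex.ofReal)ᵀ *ᵥ u (R *ᵥ x))) i
          + β x i * w (R *ᵥ x)
          + grad (fun y => w (R *ᵥ y)) x i = 0) ∧
      divC (fun y => (R.map Complex.ofReal)ᵀ *ᵥ u (R *ᵥ y)) x
        - (∑ i, β x i * ((R.map Complex.ofReal)ᵀ *ᵥ u (R *ᵥ x)) i)
        + ϱ x * w (R *ᵥ x) = f x) :=
  stmt12_general hR.1 (Set.mapsTo_iff_image_subset.2 hΩR.le) hAeq hβeq hϱeq hfeq hu hw hsys
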